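/- For n ≥ 3, the 2n-point configuration formed by the vertices of a regular n-gon together with points slightly inside near the midpoints of all edges (in generic position) is monochromatic under the Orchard relation. -/

import Mathlib

open scoped Classical

noncomputable section

/-- Orientation determinant of two vectors in the plane. -/
def det2 (u v : ℝ × ℝ) : ℝ := u.1 * v.2 - u.2 * v.1

/-- The line through `A` and `B` separates the points `P` and `Q`
(they lie in distinct open half-planes determined by the line). -/
def SepLine (A B P Q : ℝ × ℝ) : Prop :=
  det2 (B - A) (P - A) * det2 (B - A) (Q - A) < 0

/-- A finite planar point set is a generic configuration if no three of its
points are collinear. -/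
def Generic (C : Finset (ℝ × ℝ)) : Prop :=
  ∀ a ∈ C, ∀ b ∈ C, ∀ c ∈ C, a ≠ b → a ≠ c → b ≠ c →
    ¬ Collinear ℝ ({a, b, c} : Set (ℝ × ℝ))

/-- `nsep C P Q` is the number of lines spanned by (unordered) pairs of points of
`C \ {P,Q}` that separate `P` from `Q`. -/
def nsep (C : Finset (ℝ × ℝ)) (P Q : ℝ × ℝ) : ℕ :=
  (((C \ {P, Q}).powersetCard 2).filter
    (fun s => ∃ A ∈ s, ∃ B ∈ s, A ≠ B ∧ SepLine A B P Q)).card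

/-- The Orchard relation: `P ∼ Q` iff `n(P,Q) ≡ n - 3 (mod 2)` where `n = |C|`. -/
def Orchard (C : Finset (ℝ × ℝ)) (P Q : ℝ × ℝ) : Prop :=
  (nsep C P Q : ℤ) ≡ (C.card : ℤ) - 3 [ZMOD 2]

/-- A configuration is monochromatic if all its points are Orchard-equivalent. -/
def Mono (C : Finset (ℝ × ℝ)) : Prop :=
  ∀ P ∈ C, ∀ Q ∈ C, P ≠ Q → Orchard C P Q

/-- A configuration is in convex position if each of its points is a vertex of
the convex hull. -/
def ConvexPos (C : Finset (ℝ × ℝ)) : Prop :=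
  ∀ P ∈ C, P ∉ convexHull ℝ ((C : Set (ℝ × ℝ)) \ {P})

/-- The `k`-th vertex of the regular `n`-gon inscribed in the unit circle
centered at the origin. -/
def vtx (n : ℕ) (k : Fin n) : ℝ × ℝ :=
  (Real.cos (2 * Real.pi * k / n), Real.sin (2 * Real.pi * k / n))

/-- The configuration consisting of the vertices of the regular `n`-gon together
with its barycenter (the origin). -/
def ngonWithCenter (n : ℕ) : Finset (ℝ × ℝ) :=
  insert ((0, 0) : ℝ × ℝ) (Finset.image (vtx n) Finset.univ)

/-!
Order the points and let the color of `p` be the number of pairs `a < b` such that `p` lies to the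
right of the line directed from `a` to `b`, plus the number of points before `p`. A line missing `p`
and `q` separates them iff exactly one of them lies to its right. The remaining pairs counted by
the colors of `p` and `q` come from the triples `{c, p, q}`: such a triple contributes equally to
both colors if `c` is between `p` and `q`, and to exactly one of them otherwise. Hence `p` and `q`
are Orchard-equivalent iff their colors have the same parity.

Now list the `2n` points counterclockwise along the polygon as `0, …, 2n-1`, vertices having even
numbers. Were the midpoints slightly outside the polygon, the points would be in convex position and
the color of `p` would be `p (2n - p)`, which has the parity of `p`. Moving the midpoints inside
reverses precisely the triples formed by an edge and its midpoint, and each reversal changes the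
parity of the colors of the three points involved. A vertex lies in two of these triples and a
midpoint in one, so that all colors become even.
-/

open scoped Finset symmDiff Topology

/-- Twice the signed area of the triangle `A B C`: positive iff the triangle is traversed
counterclockwise. -/
def orient (A B C : ℝ × ℝ) : ℝ := det2 (B - A) (C - A)

lemma orient_eq (A B C : ℝ × ℝ) :
    orient A B C = (B.1 - A.1) * (C.2 - A.2) - (B.2 - A.2) * (C.1 - A.1) := rfl

lemma orient_rotate (A B C : ℝ × ℝ) : orient B C A = orient A B C := by
  simp only [orient_eq]; ring

lemma orient_swap (A B C : ℝ × ℝ) : orient A C B = -orient A B C := by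
  simp only [orient_eq]; ring

@[simp] lemma orient_self_left (A B : ℝ × ℝ) : orient A A B = 0 := by
  simp [orient_eq]

@[simp] lemma orient_self_right (A B : ℝ × ℝ) : orient A B B = 0 := by
  rw [← orient_rotate, orient_self_left]

@[simp] lemma orient_self_outer (A B : ℝ × ℝ) : orient A B A = 0 := by
  rw [← orient_rotate, orient_self_right]

lemma continuous_orient {X : Type*} [TopologicalSpace X] {f g h : X → ℝ × ℝ} (hf : Continuous f)
    (hg : Continuous g) (hh : Continuous h) : Continuous fun x => orient (f x) (g x) (h x) := by
  simp only [orient_eq]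
  fun_prop

lemma sepLine_comm {A B P Q : ℝ × ℝ} : SepLine A B P Q ↔ SepLine B A P Q := by
  have h (X : ℝ × ℝ) : orient B A X = -orient A B X := by rw [← orient_rotate, orient_swap]
  change orient A B P * orient A B Q < 0 ↔ orient B A P * orient B A Q < 0
  rw [h, h, neg_mul_neg]

lemma sepLine_iff_xor {A B P Q : ℝ × ℝ} (hP : orient A B P ≠ 0) (hQ : orient A B Q ≠ 0) :
    SepLine A B P Q ↔ Xor (orient A B P < 0) (orient A B Q < 0) := by
  change orient A B P * orient A B Q < 0 ↔ _
  rw [mul_neg_iff, xor_def, not_lt, not_lt, hP.symm.le_iff_lt, hQ.symm.le_iff_lt]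
  tauto

lemma nsep_comm (C : Finset (ℝ × ℝ)) (P Q : ℝ × ℝ) : nsep C P Q = nsep C Q P := by
  simp only [nsep, SepLine, mul_comm, Finset.pair_comm]

lemma orchard_comm {C : Finset (ℝ × ℝ)} {P Q : ℝ × ℝ} : Orchard C P Q ↔ Orchard C Q P := by
  rw [Orchard, Orchard, nsep_comm]

lemma card_symmDiff_modEq {α : Type*} [DecidableEq α] (s t : Finset α) :
    #(s ∆ t) ≡ #s + #t [MOD 2] := by
  have h : #(s ∆ t) = #(s \ t) + #(t \ s) := Finset.card_union_of_disjoint disjoint_sdiff_sdiff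
  have hs := Finset.card_sdiff_add_card_inter s t
  have ht := Finset.card_sdiff_add_card_inter t s
  rw [Finset.inter_comm] at ht
  rw [Nat.ModEq]
  omega

section Coloring

variable {ι : Type*} [LinearOrder ι]

lemma card_filter_powersetCard_two_image {α : Type*} [DecidableEq α] {s : Finset ι} {w : ι → α}
    (hw : Set.InjOn w s) {r : α → α → Prop} (hr : ∀ A B, r A B → r B A) :
    #{u ∈ (s.image w).powersetCard 2 | ∃ A ∈ u, ∃ B ∈ u, A ≠ B ∧ r A B} =
      #{t ∈ s ×ˢ s | t.1 < t.2 ∧ r (w t.1) (w t.2)} := by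
  symm
  refine Finset.card_bij (fun t _ => {w t.1, w t.2}) ?_ ?_ ?_
  · rintro ⟨a, b⟩ h
    simp only [Finset.mem_filter, Finset.mem_product] at h
    obtain ⟨⟨ha, hb⟩, hab, hr⟩ := h
    have hne : w a ≠ w b := hw.ne ha hb hab.ne
    simp only [Finset.mem_filter, Finset.mem_powersetCard, Finset.insert_subset_iff,
      Finset.singleton_subset_iff]
    exact ⟨⟨⟨Finset.mem_image_of_mem w ha, Finset.mem_image_of_mem w hb⟩,
      Finset.card_pair hne⟩, w a, by simp, w b, by simp, hne, hr⟩
  · rintro ⟨a, b⟩ h ⟨c, d⟩ h' heq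
    simp only [Finset.mem_filter, Finset.mem_product] at h h'
    have hpair := congrArg (fun u : Finset α => (u : Set α)) heq
    simp only [Finset.coe_pair, Set.pair_eq_pair_iff, hw.eq_iff h.1.1 h'.1.1,
      hw.eq_iff h.1.1 h'.1.2, hw.eq_iff h.1.2 h'.1.1, hw.eq_iff h.1.2 h'.1.2] at hpair
    rcases hpair with ⟨rfl, rfl⟩ | ⟨rfl, rfl⟩
    · rfl
    · exact absurd h.2.1 h'.2.1.asymm
  · intro u hu
    simp only [Finset.mem_filter, Finset.mem_powersetCard] at hu
    obtain ⟨⟨hsub, hcard⟩, A, hA, B, hB, hAB, hrAB⟩ := hu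
    obtain ⟨a, ha, rfl⟩ := Finset.mem_image.1 (hsub hA)
    obtain ⟨b, hb, rfl⟩ := Finset.mem_image.1 (hsub hB)
    have hu : {w a, w b} = u := Finset.eq_of_subset_of_card_le
      (by simp [Finset.insert_subset_iff, hA, hB]) (by rw [hcard, Finset.card_pair hAB])
    rcases lt_or_gt_of_ne (ne_of_apply_ne w hAB) with hab | hab
    · exact ⟨(a, b), by simp [ha, hb, hab, hrAB], hu⟩
    · exact ⟨(b, a), by simp [ha, hb, hab, hr _ _ hrAB], by rw [Finset.pair_comm, hu]⟩

/-- No three of the points `w i`, `i ∈ s`, are collinear: the counterpart of `Generic` for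
indexed families. -/
def GenericOn (s : Finset ι) (w : ι → ℝ × ℝ) : Prop :=
  ∀ a ∈ s, ∀ b ∈ s, ∀ c ∈ s, a ≠ b → a ≠ c → b ≠ c → orient (w a) (w b) (w c) ≠ 0

/-- The index pairs `a < b` such that `w p` lies to the right of the line directed from `w a`
to `w b`. -/
def clockwisePairs (s : Finset ι) (w : ι → ℝ × ℝ) (p : ι) : Finset (ι × ι) :=
  {t ∈ s ×ˢ s | t.1 < t.2 ∧ orient (w t.1) (w t.2) (w p) < 0}

/-- The indices which, together with `q`, form an element of `clockwisePairs s w p`. -/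
def clockwisePartners (s : Finset ι) (w : ι → ℝ × ℝ) (p q : ι) : Finset ι :=
  {c ∈ s | orient (w (min q c)) (w (max q c)) (w p) < 0}

/-- The index pairs which, together with `p`, form an increasing triple spanning a clockwise
triangle. There are none if the points `w i` are listed counterclockwise along a convex polygon. -/
def reversedPairs (s : Finset ι) (w : ι → ℝ × ℝ) (p : ι) : Finset (ι × ι) :=
  {t ∈ s ×ˢ s | (p < t.1 ∧ t.1 < t.2 ∧ orient (w p) (w t.1) (w t.2) < 0) ∨
    (t.1 < p ∧ p < t.2 ∧ orient (w t.1) (w p) (w t.2) < 0) ∨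
    (t.1 < t.2 ∧ t.2 < p ∧ orient (w t.1) (w t.2) (w p) < 0)}

/-- A natural number whose parity is the class of `w p` under the Orchard relation of the
points `w i`, `i ∈ s`; see `GenericOn.orchard_iff`. -/
def orchardColor (s : Finset ι) (w : ι → ℝ × ℝ) (p : ι) : ℕ :=
  #(clockwisePairs s w p) + #{c ∈ s | c < p}

variable {s : Finset ι} {w : ι → ℝ × ℝ} {p q : ι}

lemma mem_clockwisePairs {a b : ι} : (a, b) ∈ clockwisePairs s w p ↔
    (a ∈ s ∧ b ∈ s) ∧ a < b ∧ orient (w a) (w b) (w p) < 0 := by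
  simp only [clockwisePairs, Finset.mem_filter, Finset.mem_product]

lemma GenericOn.of_lt (h : ∀ a ∈ s, ∀ b ∈ s, ∀ c ∈ s, a < b → b < c →
    orient (w a) (w b) (w c) ≠ 0) : GenericOn s w := by
  have key : ∀ a ∈ s, ∀ b ∈ s, ∀ c ∈ s, a < b → a ≠ c → b ≠ c →
      orient (w a) (w b) (w c) ≠ 0 := by
    intro a ha b hb c hc hab hac hbc
    rcases lt_or_gt_of_ne hbc with hbc | hcb
    · exact h a ha b hb c hc hab hbc
    rcases lt_or_gt_of_ne hac with hac | hca
    · rw [orient_swap, neg_ne_zero]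
      exact h a ha c hc b hb hac hcb
    · rw [orient_rotate]
      exact h c hc a ha b hb hca hab
  intro a ha b hb c hc hab hac hbc
  rcases lt_or_gt_of_ne hab with hab | hba
  · exact key a ha b hb c hc hab hac hbc
  · rw [orient_swap, orient_rotate, neg_ne_zero]
    exact key b hb a ha c hc hba hbc hac

lemma GenericOn.injOn (hw : GenericOn s w) (hs : 2 < #s) : Set.InjOn w s := by
  intro a ha b hb hab
  by_contra hne
  obtain ⟨c, hc, hcab⟩ := Finset.exists_mem_notMem_of_card_lt_card
    ((Finset.card_le_two (a := a) (b := b)).trans_lt hs)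
  simp only [Finset.mem_insert, Finset.mem_singleton, not_or] at hcab
  exact hw a ha b hb c hc hne (Ne.symm hcab.1) (Ne.symm hcab.2) (by simp [hab])

lemma nsep_image (hw : Set.InjOn w s) (hp : p ∈ s) (hq : q ∈ s) :
    nsep (s.image w) (w p) (w q) =
      #{t ∈ (s \ {p, q}) ×ˢ (s \ {p, q}) | t.1 < t.2 ∧ SepLine (w t.1) (w t.2) (w p) (w q)} := by
  have himage : s.image w \ {w p, w q} = (s \ {p, q}).image w := by
    rw [Finset.image_sdiff_of_injOn hw (by simp [Finset.insert_subset_iff, hp, hq]),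
      Finset.image_insert, Finset.image_singleton]
  rw [nsep, himage]
  exact card_filter_powersetCard_two_image (hw.mono (by simp)) fun _ _ => sepLine_comm.1

lemma GenericOn.nsep_modEq (hw : GenericOn s w) (hinj : Set.InjOn w s) (hp : p ∈ s)
    (hq : q ∈ s) : nsep (s.image w) (w p) (w q) ≡
      #(clockwisePairs (s \ {p, q}) w p) + #(clockwisePairs (s \ {p, q}) w q) [MOD 2] := by
  rw [nsep_image hinj hp hq]
  suffices h : {t ∈ (s \ {p, q}) ×ˢ (s \ {p, q}) |
      t.1 < t.2 ∧ SepLine (w t.1) (w t.2) (w p) (w q)} =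
        clockwisePairs (s \ {p, q}) w p ∆ clockwisePairs (s \ {p, q}) w q by
    rw [h]
    exact card_symmDiff_modEq _ _
  ext ⟨a, b⟩
  simp only [Finset.mem_symmDiff, mem_clockwisePairs, Finset.mem_filter, Finset.mem_product,
    Finset.mem_sdiff, Finset.mem_insert, Finset.mem_singleton, not_or]
  by_cases h : ((a ∈ s ∧ a ≠ p ∧ a ≠ q) ∧ b ∈ s ∧ b ≠ p ∧ b ≠ q) ∧ a < b
  · obtain ⟨⟨⟨ha, hap, haq⟩, hb, hbp, hbq⟩, hab⟩ := h
    rw [sepLine_iff_xor (hw a ha b hb p hp hab.ne hap hbp) (hw a ha b hb q hq hab.ne haq hbq),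
      xor_def]
    tauto
  · tauto

lemma card_clockwisePairs_eq_add (hq : q ∈ s) : #(clockwisePairs s w p) =
    #(clockwisePairs (s \ {p, q}) w p) + #(clockwisePartners s w p q) := by
  rw [← Finset.card_filter_add_card_filter_not (s := clockwisePairs s w p)
    fun t => t.1 ≠ q ∧ t.2 ≠ q]
  congr 1
  · congr 1
    ext ⟨a, b⟩
    have hp : orient (w a) (w b) (w p) < 0 → a ≠ p ∧ b ≠ p := fun h =>
      ⟨by rintro rfl; simp at h, by rintro rfl; simp at h⟩
    simp only [Finset.mem_filter, mem_clockwisePairs, Finset.mem_sdiff, Finset.mem_insert,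
      Finset.mem_singleton, not_or]
    tauto
  · symm
    refine Finset.card_bij (fun c _ => (min q c, max q c)) ?_ ?_ ?_
    · intro c hc
      simp only [clockwisePartners, Finset.mem_filter] at hc
      have hqc : q ≠ c := by rintro rfl; simp at hc
      rcases lt_or_gt_of_ne hqc with h | h <;>
        simp_all [mem_clockwisePairs, h.le]
    · intro c _ d _ h
      rw [Prod.mk.injEq] at h
      grind
    · rintro ⟨a, b⟩ h
      simp only [Finset.mem_filter, mem_clockwisePairs] at h
      obtain ⟨⟨⟨ha, hb⟩, hab, horient⟩, hmem⟩ := h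
      obtain rfl | rfl : a = q ∨ b = q := by tauto
      · exact ⟨b, by simp [clockwisePartners, *, hab.le], by simp [hab.le]⟩
      · exact ⟨a, by simp [clockwisePartners, *, hab.le], by simp [hab.le]⟩

lemma GenericOn.clockwisePartners_symmDiff (hw : GenericOn s w) (hp : p ∈ s) (hq : q ∈ s)
    (hpq : p < q) :
    clockwisePartners s w p q ∆ clockwisePartners s w q p = {c ∈ s | c < p ∨ q < c} := by
  ext c
  by_cases hc : c ∈ s
  swap
  · simp [Finset.mem_symmDiff, clockwisePartners, hc]
  simp only [Finset.mem_symmDiff, clockwisePartners, Finset.mem_filter, hc, true_and]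
  rcases eq_or_ne c p with rfl | hcp
  · simp [hpq.le, hpq.not_gt]
  rcases eq_or_ne c q with rfl | hcq
  · simp [hpq.le, hpq.not_gt]
  have hopposite {x : ℝ} (hx : x ≠ 0) : -x < 0 ∧ ¬ x < 0 ∨ x < 0 ∧ ¬ -x < 0 := by
    rcases lt_or_gt_of_ne hx with h | h <;> simp [h, h.le]
  rcases lt_or_gt_of_ne hcp with hcp' | hpc
  · have hcq' := hcp'.trans hpq
    simpa [hcp', hcp'.le, hcq'.le, orient_swap (w c) (w p)] using
      hopposite (hw c hc p hp q hq hcp hcq hpq.ne)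
  rcases lt_or_gt_of_ne hcq with hcq' | hqc
  · simp [hpc.le, hcq'.le, hpc.not_gt, hcq'.not_gt, orient_rotate (w p)]
  · have horient : orient (w q) (w c) (w p) = -orient (w p) (w c) (w q) := by
      rw [orient_swap (w p) (w q), neg_neg, orient_rotate (w p) (w q)]
    simpa [hqc, hqc.le, hpc.le, horient] using
      hopposite (hw p hp c hc q hq hcp.symm hpq.ne hcq)

lemma card_filter_lt_or_gt (hq : q ∈ s) (hpq : p < q) :
    #{c ∈ s | c < p ∨ q < c} + #{c ∈ s | c < q} + 1 = #s + #{c ∈ s | c < p} := by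
  have hdisj : Disjoint {c ∈ s | c < p} {c ∈ s | q < c} :=
    Finset.disjoint_filter.2 fun c _ hcp hqc => (hcp.trans hpq).asymm hqc
  have hle : {c ∈ s | ¬ q < c} = insert q {c ∈ s | c < q} := by
    ext c
    simp only [Finset.mem_filter, Finset.mem_insert, not_lt, le_iff_lt_or_eq]
    grind
  have hsplit := Finset.card_filter_add_card_filter_not (s := s) fun c => q < c
  rw [hle, Finset.card_insert_of_notMem (by simp)] at hsplit
  rw [Finset.filter_or, Finset.card_union_of_disjoint hdisj]
  omega

lemma GenericOn.orchard_iff (hw : GenericOn s w) (hinj : Set.InjOn w s) (hp : p ∈ s)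
    (hq : q ∈ s) (hne : p ≠ q) :
    Orchard (s.image w) (w p) (w q) ↔ orchardColor s w p ≡ orchardColor s w q [MOD 2] := by
  wlog hpq : p < q generalizing p q
  · rw [orchard_comm, this hq hp hne.symm (lt_of_le_of_ne (not_lt.1 hpq) hne.symm), Nat.ModEq.comm]
  have hp' := card_clockwisePairs_eq_add (w := w) (p := p) hq
  have hq' := card_clockwisePairs_eq_add (w := w) (p := q) hp
  have hpartners := card_symmDiff_modEq (clockwisePartners s w p q) (clockwisePartners s w q p)
  have hnsep := hw.nsep_modEq hinj hp hq
  have hrank := card_filter_lt_or_gt hq hpq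
  rw [Finset.pair_comm] at hq'
  rw [hw.clockwisePartners_symmDiff hp hq hpq] at hpartners
  rw [Orchard, Finset.card_image_of_injOn hinj, orchardColor, orchardColor]
  simp only [Nat.ModEq, Int.ModEq] at *
  omega

lemma GenericOn.clockwisePairs_eq_symmDiff (hw : GenericOn s w) (hp : p ∈ s) :
    clockwisePairs s w p = ({c ∈ s | c < p} ×ˢ {c ∈ s | p < c}) ∆ reversedPairs s w p := by
  ext ⟨a, b⟩
  by_cases hs : a ∈ s ∧ b ∈ s
  swap
  · simp only [mem_clockwisePairs, reversedPairs, Finset.mem_symmDiff, Finset.mem_filter,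
      Finset.mem_product]
    tauto
  obtain ⟨ha, hb⟩ := hs
  simp only [mem_clockwisePairs, reversedPairs, Finset.mem_symmDiff, Finset.mem_filter,
    Finset.mem_product, ha, hb, true_and]
  rcases lt_or_ge a b with hab | hba
  swap
  · grind
  rcases lt_trichotomy p a with hpa | rfl | hap
  · simp [hab, hpa, hpa.not_gt, (hpa.trans hab).not_gt, orient_rotate (w p)]
  · simp
  rcases lt_trichotomy p b with hpb | rfl | hbp
  · have h := hw a ha p hp b hb hap.ne hab.ne hpb.ne
    simp [hab, hap, hpb, hap.not_gt, hpb.not_gt, orient_swap (w a) (w p), h.symm.le_iff_lt]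
  · simp
  · simp [hab, hap, hbp, hap.not_gt, hbp.not_gt]

lemma GenericOn.orchardColor_modEq (hw : GenericOn s w) (hp : p ∈ s) :
    orchardColor s w p ≡
      #{c ∈ s | c < p} * (#{c ∈ s | p < c} + 1) + #(reversedPairs s w p) [MOD 2] := by
  have h := card_symmDiff_modEq ({c ∈ s | c < p} ×ˢ {c ∈ s | p < c}) (reversedPairs s w p)
  rw [← hw.clockwisePairs_eq_symmDiff hp, Finset.card_product] at h
  rw [orchardColor, mul_add_one, add_right_comm]
  exact h.add_right _

end Coloring

section EdgeReversed

/-- The triples `x < y < z` of the form `2i, 2i+1, 2i+2` modulo `2n`, in increasing order. For `2n`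
points along the boundary of an `n`-gon they are an edge with its (approximate) midpoint, vertices
having even and midpoints odd indices. -/
def EdgeTriple (n x y z : ℕ) : Prop :=
  (x % 2 = 0 ∧ y = x + 1 ∧ z = x + 2 ∧ z < 2 * n) ∨
    (x = 0 ∧ 0 < y ∧ y + 2 = 2 * n ∧ z + 1 = 2 * n)

/-- The orientations of the triples of `w 0, …, w (2n-1)` are those of `2n` points listed
counterclockwise along a convex polygon, except that those of the edge triples are reversed. -/
structure EdgeReversed (n : ℕ) (w : ℕ → ℝ × ℝ) : Prop where
  pos : ∀ x y z, x < y → y < z → z < 2 * n → ¬ EdgeTriple n x y z → 0 < orient (w x) (w y) (w z)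
  neg : ∀ x y z, EdgeTriple n x y z → orient (w x) (w y) (w z) < 0

variable {n : ℕ} {w : ℕ → ℝ × ℝ} {p : ℕ}

namespace EdgeReversed

lemma orient_neg_iff (hw : EdgeReversed n w) {x y z : ℕ} (hxy : x < y) (hyz : y < z)
    (hz : z < 2 * n) : orient (w x) (w y) (w z) < 0 ↔ EdgeTriple n x y z :=
  ⟨fun h => of_not_not fun h' => (hw.pos x y z hxy hyz hz h').not_gt h, hw.neg x y z⟩

lemma genericOn (hw : EdgeReversed n w) : GenericOn (Finset.range (2 * n)) w := by
  refine GenericOn.of_lt fun x _ y _ z hz hxy hyz => ?_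
  by_cases h : EdgeTriple n x y z
  · exact (hw.neg x y z h).ne
  · exact (hw.pos x y z hxy hyz (Finset.mem_range.1 hz) h).ne'

lemma mem_reversedPairs (hw : EdgeReversed n w) (hp : p < 2 * n) {a b : ℕ} :
    (a, b) ∈ reversedPairs (Finset.range (2 * n)) w p ↔
      EdgeTriple n p a b ∨ EdgeTriple n a p b ∨ EdgeTriple n a b p := by
  have hlt {x y z : ℕ} (h : EdgeTriple n x y z) : x < y ∧ y < z ∧ z < 2 * n := by
    unfold EdgeTriple at h
    omega
  have hiff {x y z : ℕ} (hz : z < 2 * n) :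
      x < y ∧ y < z ∧ orient (w x) (w y) (w z) < 0 ↔ EdgeTriple n x y z :=
    ⟨fun h => (hw.orient_neg_iff h.1 h.2.1 hz).1 h.2.2,
      fun h => ⟨(hlt h).1, (hlt h).2.1, hw.neg x y z h⟩⟩
  simp only [reversedPairs, Finset.mem_filter, Finset.mem_product, Finset.mem_range]
  constructor
  · rintro ⟨⟨-, hb⟩, h⟩
    rwa [hiff hb, hiff hb, hiff hp] at h
  · intro h
    have hab : a < 2 * n ∧ b < 2 * n := by
      rcases h with h | h | h <;> have := hlt h <;> omega
    exact ⟨hab, by rwa [hiff hab.2, hiff hab.2, hiff hp]⟩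

lemma reversedPairs_of_odd (hw : EdgeReversed n w) (hn : 2 ≤ n) (hp : p < 2 * n)
    (hodd : p % 2 = 1) :
    reversedPairs (Finset.range (2 * n)) w p =
      {if p + 1 = 2 * n then (0, p - 1) else (p - 1, p + 1)} := by
  ext ⟨a, b⟩
  rw [hw.mem_reversedPairs hp, Finset.mem_singleton]
  unfold EdgeTriple
  constructor
  · rintro ((h | h) | (h | h) | h | h) <;> split_ifs <;> simp only [Prod.mk.injEq] <;> omega
  · split_ifs <;> rw [Prod.mk.injEq] <;> rintro ⟨rfl, rfl⟩
    · exact .inr (.inr (.inr (by omega)))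
    · exact .inr (.inl (.inl (by omega)))

lemma reversedPairs_of_even (hw : EdgeReversed n w) (hn : 2 ≤ n) (hp : p < 2 * n)
    (heven : p % 2 = 0) :
    reversedPairs (Finset.range (2 * n)) w p =
      {if p = 0 then (2 * n - 2, 2 * n - 1) else (p - 2, p - 1),
        if p + 2 = 2 * n then (0, p + 1) else (p + 1, p + 2)} := by
  ext ⟨a, b⟩
  rw [hw.mem_reversedPairs hp, Finset.mem_insert, Finset.mem_singleton]
  unfold EdgeTriple
  constructor
  · rintro ((h | h) | (h | h) | h | h) <;> split_ifs <;> simp only [Prod.mk.injEq] <;> omega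
  · rw [or_comm]
    rintro (h | h) <;> split_ifs at h <;> obtain ⟨rfl, rfl⟩ := Prod.mk.inj h
    · exact .inr (.inl (.inr (by omega)))
    · exact .inl (.inl (by omega))
    · exact .inl (.inr (by omega))
    · exact .inr (.inr (.inl (by omega)))

lemma card_reversedPairs_modEq (hw : EdgeReversed n w) (hn : 2 ≤ n) (hp : p < 2 * n) :
    #(reversedPairs (Finset.range (2 * n)) w p) ≡ p [MOD 2] := by
  rcases Nat.mod_two_eq_zero_or_one p with heven | hodd
  · rw [hw.reversedPairs_of_even hn hp heven, Finset.card_pair]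
    · exact heven.symm
    · split_ifs <;> rw [Ne, Prod.mk.injEq] <;> omega
  · rw [hw.reversedPairs_of_odd hn hp hodd, Finset.card_singleton]
    exact hodd.symm

lemma orchardColor_modEq_zero (hw : EdgeReversed n w) (hn : 2 ≤ n) (hp : p < 2 * n) :
    orchardColor (Finset.range (2 * n)) w p ≡ 0 [MOD 2] := by
  have hbelow : #{c ∈ Finset.range (2 * n) | c < p} = p := by
    rw [show {c ∈ Finset.range (2 * n) | c < p} = Finset.range p by ext; simp; omega,
      Finset.card_range]
  have habove : #{c ∈ Finset.range (2 * n) | p < c} + 1 = 2 * n - p := by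
    rw [show {c ∈ Finset.range (2 * n) | p < c} = Finset.Ioo p (2 * n) by ext; simp; omega,
      Nat.card_Ioo]
    omega
  have hconvex : p * (2 * n - p) ≡ p [MOD 2] := by
    rcases Nat.mod_two_eq_zero_or_one p with h | h <;>
      simp [Nat.ModEq, Nat.mul_mod, h]
    omega
  have hcolor := hw.genericOn.orchardColor_modEq (Finset.mem_range.2 hp)
  rw [hbelow, habove] at hcolor
  calc orchardColor (Finset.range (2 * n)) w p
    _ ≡ p + p [MOD 2] := hcolor.trans (hconvex.add (hw.card_reversedPairs_modEq hn hp))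
    _ ≡ 0 [MOD 2] := by simp [Nat.ModEq, ← two_mul]

theorem mono (hw : EdgeReversed n w) (hn : 2 ≤ n) : Mono ((Finset.range (2 * n)).image w) := by
  intro P hP Q hQ hPQ
  obtain ⟨p, hp, rfl⟩ := Finset.mem_image.1 hP
  obtain ⟨q, hq, rfl⟩ := Finset.mem_image.1 hQ
  have hinj := hw.genericOn.injOn (by rw [Finset.card_range]; omega)
  rw [hw.genericOn.orchard_iff hinj hp hq (ne_of_apply_ne w hPQ)]
  exact (hw.orchardColor_modEq_zero hn (Finset.mem_range.1 hp)).trans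
    (hw.orchardColor_modEq_zero hn (Finset.mem_range.1 hq)).symm

end EdgeReversed

end EdgeReversed

section ConvexPolygon

lemma eight_mul_orient_midpoint (P Q R : Fin 2 → ℝ × ℝ) :
    8 * orient (midpoint ℝ (P 0) (P 1)) (midpoint ℝ (Q 0) (Q 1)) (midpoint ℝ (R 0) (R 1)) =
      ∑ t : Fin 2 × Fin 2 × Fin 2, orient (P t.1) (Q t.2.1) (R t.2.2) := by
  simp only [orient_eq, Fintype.sum_prod_type, Fin.sum_univ_two, midpoint_eq_smul_add,
    Prod.smul_fst, Prod.smul_snd, Prod.fst_add, Prod.snd_add, smul_eq_mul, invOf_eq_inv]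
  ring

lemma convex_setOf_orient_nonneg (A B : ℝ × ℝ) : Convex ℝ {Q | 0 ≤ orient A B Q} := by
  intro P hP Q hQ a b ha hb hab
  have horient : orient A B (a • P + b • Q) = a * orient A B P + b * orient A B Q := by
    simp only [orient_eq, Prod.fst_add, Prod.snd_add, Prod.smul_fst, Prod.smul_snd, smul_eq_mul]
    linear_combination ((B.1 - A.1) * A.2 - (B.2 - A.2) * A.1) * hab
  change 0 ≤ orient A B (a • P + b • Q)
  rw [horient]
  exact add_nonneg (mul_nonneg ha hP) (mul_nonneg hb hQ)

lemma orient_pos_of_mem_interior_convexHull {A B P : ℝ × ℝ} {S : Set (ℝ × ℝ)} (hAB : A ≠ B)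
    (hS : ∀ Q ∈ S, 0 ≤ orient A B Q) (hP : P ∈ interior (convexHull ℝ S)) :
    0 < orient A B P := by
  -- Move `P` along the right-hand normal of `B - A`.
  let path (t : ℝ) : ℝ × ℝ := P + t • (B.2 - A.2, A.1 - B.1)
  have hpath (t : ℝ) :
      orient A B (path t) = orient A B P - t * ((B.1 - A.1) ^ 2 + (B.2 - A.2) ^ 2) := by
    simp only [path, orient_eq, Prod.fst_add, Prod.snd_add, Prod.smul_fst, Prod.smul_snd,
      smul_eq_mul]
    ring
  have hnear : ∀ᶠ t in 𝓝[>] (0 : ℝ), path t ∈ interior (convexHull ℝ S) := by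
    have hcont : Continuous path := by fun_prop
    exact nhdsWithin_le_nhds (hcont.continuousAt.eventually_mem
      (isOpen_interior.mem_nhds (by simpa [path, Prod.mk_zero_zero] using hP)))
  obtain ⟨t, ht, htpos⟩ := (hnear.and self_mem_nhdsWithin).exists
  have hnonneg : 0 ≤ orient A B (path t) :=
    convexHull_min hS (convex_setOf_orient_nonneg A B) (interior_subset ht)
  have hlen : 0 < (B.1 - A.1) ^ 2 + (B.2 - A.2) ^ 2 := by
    contrapose! hAB
    ext <;> nlinarith [sq_nonneg (B.1 - A.1), sq_nonneg (B.2 - A.2)]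
  rw [hpath] at hnonneg
  linarith [mul_pos htpos hlen]

lemma exists_orient_pos_of_dist_lt {ι : Type*} [Finite ι] (c : ι → ℝ × ℝ) :
    ∃ ε > 0, ∀ w : ι → ℝ × ℝ, (∀ i, dist (w i) (c i) < ε) → ∀ i j k,
      0 < orient (c i) (c j) (c k) → 0 < orient (w i) (w j) (w k) := by
  have := Fintype.ofFinite ι
  have hnear : ∀ᶠ w in 𝓝 c, ∀ i j k,
      0 < orient (c i) (c j) (c k) → 0 < orient (w i) (w j) (w k) := by
    simp only [Filter.eventually_all]
    intro i j k hpos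
    have hcont : Continuous fun w : ι → ℝ × ℝ => orient (w i) (w j) (w k) :=
      continuous_orient (continuous_apply i) (continuous_apply j) (continuous_apply k)
    exact hcont.continuousAt.eventually_const_lt hpos
  obtain ⟨ε, hε, h⟩ := Metric.eventually_nhds_iff.1 hnear
  exact ⟨ε, hε, fun w hw => h ((dist_pi_lt_iff hε).2 hw)⟩

variable {n : ℕ}

/-- The points `v 0, …, v (n-1)` are the vertices of a strictly convex polygon, listed
counterclockwise. -/
def PositivelyOriented (v : Fin n → ℝ × ℝ) : Prop :=
  ∀ i j k, i < j → j < k → 0 < orient (v i) (v j) (v k)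

lemma PositivelyOriented.injective {v : Fin n → ℝ × ℝ} (hv : PositivelyOriented v) (hn : 3 ≤ n) :
    Function.Injective v := by
  have hgen : GenericOn Finset.univ v :=
    GenericOn.of_lt fun i _ j _ k _ hij hjk => (hv i j k hij hjk).ne'
  simpa [Set.injOn_univ] using hgen.injOn (by rwa [Finset.card_univ, Fintype.card_fin])

variable [NeZero n]

/-- The extension of a family over `Fin n` to an `n`-periodic sequence. -/
def cyclic (v : Fin n → ℝ × ℝ) (k : ℕ) : ℝ × ℝ := v (Fin.ofNat n k)

/-- The sequence `v 0, m 0, v 1, m 1, …`, continued periodically. -/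
def interleave (v m : Fin n → ℝ × ℝ) (k : ℕ) : ℝ × ℝ :=
  if k % 2 = 0 then cyclic v (k / 2) else cyclic m (k / 2)

/-- The `k`-th point in the counterclockwise list of vertices (even `k`) and edge midpoints (odd
`k`) of the polygon `v`. -/
def boundaryPoint (v : Fin n → ℝ × ℝ) (k : ℕ) : ℝ × ℝ :=
  midpoint ℝ (cyclic v (k / 2)) (cyclic v ((k + 1) / 2))

variable {v m : Fin n → ℝ × ℝ}

lemma cyclic_val (i : Fin n) : cyclic v i = v i := by simp [cyclic]

lemma cyclic_val_add_one (i : Fin n) : cyclic v (i + 1) = v (i + 1) :=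
  congrArg v (Fin.ext (by simp [Fin.val_add]))

lemma cyclic_self : cyclic v n = cyclic v 0 := by simp [cyclic, Fin.ofNat]

lemma interleave_even (i : ℕ) : interleave v m (2 * i) = cyclic v i := by simp [interleave]

lemma interleave_odd (i : ℕ) : interleave v m (2 * i + 1) = cyclic m i := by
  rw [interleave, if_neg (by omega), show (2 * i + 1) / 2 = i by omega]

lemma image_interleave : (Finset.range (2 * n)).image (interleave v m) =
    Finset.image v Finset.univ ∪ Finset.image m Finset.univ := by
  ext P
  simp only [Finset.mem_image, Finset.mem_range, Finset.mem_union, Finset.mem_univ, true_and]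
  constructor
  · rintro ⟨k, -, rfl⟩
    rcases Nat.even_or_odd' k with ⟨i, rfl | rfl⟩
    · exact .inl ⟨_, (interleave_even i).symm⟩
    · exact .inr ⟨_, (interleave_odd i).symm⟩
  · rintro (⟨i, rfl⟩ | ⟨i, rfl⟩)
    · exact ⟨2 * i, by omega, by rw [interleave_even, cyclic_val]⟩
    · exact ⟨2 * i + 1, by omega, by rw [interleave_odd, cyclic_val]⟩

lemma dist_interleave_boundaryPoint_lt {ε : ℝ} (hε : 0 < ε)
    (hm : ∀ i, dist (m i) (midpoint ℝ (v i) (v (i + 1))) < ε) {k : ℕ} (hk : k < 2 * n) :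
    dist (interleave v m k) (boundaryPoint v k) < ε := by
  rcases Nat.even_or_odd' k with ⟨i, rfl | rfl⟩
  · rw [interleave_even, boundaryPoint, show 2 * i / 2 = i by omega,
      show (2 * i + 1) / 2 = i by omega, midpoint_self, dist_self]
    exact hε
  · lift i to Fin n using by omega
    rw [interleave_odd, boundaryPoint, show (2 * (i : ℕ) + 1) / 2 = i by omega,
      show (2 * (i : ℕ) + 1 + 1) / 2 = i + 1 by omega, cyclic_val, cyclic_val, cyclic_val_add_one]
    exact hm i

namespace PositivelyOriented

lemma orient_cyclic_pos (hv : PositivelyOriented v) {i j k : ℕ} (hij : i < j) (hjk : j < k)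
    (hk : k ≤ n) (hki : k < i + n) : 0 < orient (cyclic v i) (cyclic v j) (cyclic v k) := by
  have hlt {i j k : ℕ} (hij : i < j) (hjk : j < k) (hk : k < n) :
      0 < orient (cyclic v i) (cyclic v j) (cyclic v k) := by
    lift i to Fin n using by omega
    lift j to Fin n using by omega
    lift k to Fin n using hk
    simpa only [cyclic_val] using hv i j k hij hjk
  rcases hk.lt_or_eq with hk | rfl
  · exact hlt hij hjk hk
  · rw [cyclic_self, orient_rotate]
    exact hlt (by omega) hij hjk

lemma orient_cyclic_nonneg (hv : PositivelyOriented v) {i j k : ℕ} (hij : i ≤ j) (hjk : j ≤ k)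
    (hk : k ≤ n) : 0 ≤ orient (cyclic v i) (cyclic v j) (cyclic v k) := by
  rcases hij.eq_or_lt with rfl | hij
  · simp
  rcases hjk.eq_or_lt with rfl | hjk
  · simp
  by_cases hki : k < i + n
  · exact (hv.orient_cyclic_pos hij hjk hk hki).le
  · obtain ⟨rfl, rfl⟩ : i = 0 ∧ k = n := by omega
    simp [cyclic_self]

lemma orient_edge_nonneg (hv : PositivelyOriented v) (i j : Fin n) :
    0 ≤ orient (v i) (v (i + 1)) (v j) := by
  rw [← cyclic_val_add_one (v := v), ← cyclic_val (v := v) i, ← cyclic_val (v := v) j]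
  rcases Nat.lt_or_ge i j with hij | hji
  · exact hv.orient_cyclic_nonneg (by omega) (by omega) (by omega)
  · rw [orient_rotate]
    exact hv.orient_cyclic_nonneg (by omega) (by omega) (by omega)

lemma orient_edge_pos (hv : PositivelyOriented v) (hn : 3 ≤ n) (i : Fin n) {P : ℝ × ℝ}
    (hP : P ∈ interior (convexHull ℝ (Set.range v))) : 0 < orient (v i) (v (i + 1)) P := by
  refine orient_pos_of_mem_interior_convexHull ?_ ?_ hP
  · have : Fact (1 < n) := ⟨by omega⟩
    exact (hv.injective hn).ne (by simp; omega)
  · rintro _ ⟨j, rfl⟩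
    exact hv.orient_edge_nonneg i j

lemma orient_boundaryPoint_pos (hv : PositivelyOriented v) (hn : 3 ≤ n) {x y z : ℕ} (hxy : x < y)
    (hyz : y < z) (hz : z < 2 * n) (hedge : ¬ EdgeTriple n x y z) :
    0 < orient (boundaryPoint v x) (boundaryPoint v y) (boundaryPoint v z) := by
  let ends (k : ℕ) (a : Fin 2) : ℝ × ℝ := cyclic v ((k + a) / 2)
  have hstrict : ∃ a b c : Fin 2, (x + a) / 2 < (y + b) / 2 ∧ (y + b) / 2 < (z + c) / 2 ∧
      (z + c) / 2 < (x + a) / 2 + n := by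
    simp only [Fin.exists_fin_two, Fin.val_zero, Fin.val_one]
    unfold EdgeTriple at hedge
    omega
  obtain ⟨a, b, c, hab, hbc, hca⟩ := hstrict
  have hsum : 0 < ∑ t : Fin 2 × Fin 2 × Fin 2, orient (ends x t.1) (ends y t.2.1) (ends z t.2.2) :=
    Finset.sum_pos' (fun t _ => hv.orient_cyclic_nonneg (by omega) (by omega) (by omega))
      ⟨(a, b, c), Finset.mem_univ _, hv.orient_cyclic_pos hab hbc (by omega) hca⟩
  rw [← eight_mul_orient_midpoint] at hsum
  exact pos_of_mul_pos_right hsum (by norm_num)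

lemma orient_interleave_neg (hv : PositivelyOriented v) (hn : 3 ≤ n)
    (hm : ∀ i, m i ∈ interior (convexHull ℝ (Set.range v))) {x y z : ℕ}
    (hedge : EdgeTriple n x y z) :
    orient (interleave v m x) (interleave v m y) (interleave v m z) < 0 := by
  have hneg (i : Fin n) : orient (cyclic v i) (cyclic m i) (cyclic v (i + 1)) < 0 := by
    rw [orient_swap, neg_lt_zero, cyclic_val, cyclic_val, cyclic_val_add_one]
    exact hv.orient_edge_pos hn i (hm i)
  rcases hedge with ⟨hx, rfl, rfl, hlt⟩ | ⟨rfl, -, hy, hz⟩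
  · obtain ⟨i, rfl⟩ : ∃ i : Fin n, x = 2 * i := ⟨⟨x / 2, by omega⟩, by simp only; omega⟩
    rw [show 2 * (i : ℕ) + 2 = 2 * (i + 1) by ring, interleave_even, interleave_even,
      interleave_odd]
    exact hneg i
  · obtain ⟨i, rfl⟩ : ∃ i : Fin n, y = 2 * i := ⟨⟨y / 2, by omega⟩, by simp only; omega⟩
    obtain rfl : z = 2 * i + 1 := by omega
    have h := hneg i
    rw [show (i : ℕ) + 1 = n by omega, cyclic_self, orient_rotate] at h
    rwa [show 0 = 2 * 0 from rfl, interleave_even, interleave_even, interleave_odd]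

end PositivelyOriented

end ConvexPolygon

lemma orient_cos_sin (a b c : ℝ) :
    orient (Real.cos (2 * a), Real.sin (2 * a)) (Real.cos (2 * b), Real.sin (2 * b))
      (Real.cos (2 * c), Real.sin (2 * c)) =
    4 * Real.sin (b - a) * Real.sin (c - b) * Real.sin (c - a) := by
  have h : orient (Real.cos (2 * a), Real.sin (2 * a)) (Real.cos (2 * b), Real.sin (2 * b))
      (Real.cos (2 * c), Real.sin (2 * c)) =
      Real.sin (2 * (b - a)) + Real.sin (2 * (c - b)) - Real.sin (2 * (b - a + (c - b))) := by
    rw [sub_add_sub_cancel', mul_sub, mul_sub, mul_sub]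
    simp only [orient_eq, Real.sin_sub]
    ring
  rw [h, ← sub_add_sub_cancel' b a c]
  simp only [Real.sin_two_mul, Real.sin_add, Real.cos_add]
  linear_combination
    -2 * Real.sin (b - a) * Real.cos (b - a) * Real.sin_sq_add_cos_sq (c - b) -
    2 * Real.sin (c - b) * Real.cos (c - b) * Real.sin_sq_add_cos_sq (b - a)

lemma positivelyOriented_vtx (n : ℕ) : PositivelyOriented (vtx n) := by
  intro i j k hij hjk
  have hn : (0 : ℝ) < n := by exact_mod_cast i.pos
  have hvtx (l : Fin n) : vtx n l =
      (Real.cos (2 * (Real.pi * l / n)), Real.sin (2 * (Real.pi * l / n))) := by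
    rw [vtx, mul_assoc, mul_div_assoc]
  have hsin {a b : Fin n} (hab : a < b) :
      0 < Real.sin (Real.pi * b / n - Real.pi * a / n) := by
    have hab' : (a : ℝ) < b := by exact_mod_cast hab
    have hb : (b : ℝ) < n := by exact_mod_cast b.isLt
    rw [← sub_div, ← mul_sub]
    apply Real.sin_pos_of_pos_of_lt_pi
    · have := sub_pos.2 hab'
      positivity
    · rw [div_lt_iff₀ hn]
      gcongr
      linarith [Nat.cast_nonneg (α := ℝ) (a : ℕ)]
  rw [hvtx, hvtx, hvtx, orient_cos_sin]
  exact mul_pos (mul_pos (mul_pos four_pos (hsin hij)) (hsin hjk)) (hsin (hij.trans hjk))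

theorem midpoint_family_mono_general {n : ℕ} [NeZero n] (hn : 3 ≤ n) {v : Fin n → ℝ × ℝ}
    (hv : PositivelyOriented v) :
    ∃ ε > (0 : ℝ), ∀ m : Fin n → ℝ × ℝ,
      (∀ i : Fin n, dist (m i) (midpoint ℝ (v i) (v (i + 1))) < ε) →
      (∀ i : Fin n, m i ∈ interior (convexHull ℝ (Set.range v))) →
      Mono (Finset.image v Finset.univ ∪ Finset.image m Finset.univ) := by
  obtain ⟨ε, hε, hnear⟩ :=
    exists_orient_pos_of_dist_lt fun k : Fin (2 * n) => boundaryPoint v k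
  refine ⟨ε, hε, fun m hdist hm => ?_⟩
  have hpos := hnear (fun k => interleave v m k)
    fun k => dist_interleave_boundaryPoint_lt hε hdist k.isLt
  have hw : EdgeReversed n (interleave v m) :=
    { pos := fun x y z hxy hyz hz hedge => hpos ⟨x, by omega⟩ ⟨y, by omega⟩ ⟨z, hz⟩
        (hv.orient_boundaryPoint_pos hn hxy hyz hz hedge)
      neg := fun x y z => hv.orient_interleave_neg hn hm }
  rw [← image_interleave]
  exact hw.mono (by omega)

/-- For `n ≥ 3`, the `2n`-point configuration formed by the vertices of a
regular `n`-gon together with points slightly inside the polygon near the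
midpoints of all edges (in generic position) is monochromatic. -/
theorem midpoint_family_mono (n : ℕ) [NeZero n] (hn : 3 ≤ n) :
    ∃ ε > (0 : ℝ), ∀ m : Fin n → ℝ × ℝ,
      (∀ i : Fin n, dist (m i) (midpoint ℝ (vtx n i) (vtx n (i + 1))) < ε) →
      (∀ i : Fin n, m i ∈ interior (convexHull ℝ (Set.range (vtx n)))) →
      Generic (Finset.image (vtx n) Finset.univ ∪ Finset.image m Finset.univ) →
      Mono (Finset.image (vtx n) Finset.univ ∪ Finset.image m Finset.univ) := by
  obtain ⟨ε, hε, h⟩ := midpoint_family_mono_general hn (positivelyOriented_vtx n)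
  exact ⟨ε, hε, fun m hdist hint _ => h m hdist hint⟩
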